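/- arXiv:2406.05585 — 5 statements merged into one kernel-verified Lean document; each statement's English description precedes it below -/
import Mathlib

section
/- Let G be a connected simple graph on a finite nonempty linearly ordered vertex type V with oriented incidence matrix D. Then the rank of D, viewed as a matrix over ℚ, equals |V| − 1. -/
open SimpleGraph Matrix

/-- The oriented incidence matrix of a simple graph on a linearly ordered vertex type:
the column of an edge with endpoints `a < b` has `+1` in row `b`, `-1` in row `a`,
and `0` elsewhere. -/
def orientedIncMat {V : Type*} [LinearOrder V] (G : SimpleGraph V) :
    Matrix V G.edgeSet ℤ := fun v e =>
  (if v = (e : Sym2 V).sup then 1 else 0) - (if v = (e : Sym2 V).inf then 1 else 0)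

/-!
Pairing a vertex function `x` with the column of an edge gives the difference of `x` at the two
endpoints, so the left kernel of the matrix consists of the functions constant on connected
components. Rank–nullity then gives rank `|V| - c`, where `c` is the number of components.
-/

theorem eq_of_reachable_of_forall_adj {V α : Type*} {G : SimpleGraph V} {f : V → α}
    (hf : ∀ a b, G.Adj a b → f a = f b) {a b : V} (hab : G.Reachable a b) : f a = f b := by
  obtain ⟨p⟩ := hab
  induction p with
  | nil => rfl
  | cons hadj _ ih => exact (hf _ _ hadj).trans ih

section

variable {V : Type*} [Fintype V] [LinearOrder V] (G : SimpleGraph V)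

theorem vecMul_orientedIncMat_apply {R : Type*} [NonAssocRing R] (x : V → R) (e : G.edgeSet) :
    (x ᵥ* (orientedIncMat G).map ((↑) : ℤ → R)) e =
      x (e : Sym2 V).sup - x (e : Sym2 V).inf := by
  simp [vecMul, dotProduct, orientedIncMat, mul_sub, Finset.sum_sub_distrib]

theorem vecMul_orientedIncMat_eq_zero_iff_forall_adj {R : Type*} [NonAssocRing R] (x : V → R) :
    x ᵥ* (orientedIncMat G).map ((↑) : ℤ → R) = 0 ↔ ∀ a b, G.Adj a b → x a = x b := by
  have sup_eq_inf_iff (a b : V) : x (a ⊔ b) = x (a ⊓ b) ↔ x a = x b := by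
    rcases le_total a b with hab | hab <;> simp [hab, eq_comm]
  simp only [funext_iff, vecMul_orientedIncMat_apply, Pi.zero_apply, sub_eq_zero, Subtype.forall,
    Sym2.forall, mem_edgeSet, Sym2.sup_mk, Sym2.inf_mk, sup_eq_inf_iff]

theorem ker_vecMulLinear_orientedIncMat (R : Type*) [Ring R] :
    LinearMap.ker ((orientedIncMat G).map ((↑) : ℤ → R)).vecMulLinear =
      LinearMap.range (LinearMap.funLeft R R G.connectedComponentMk) := by
  ext x
  rw [LinearMap.mem_ker, vecMulLinear_apply, vecMul_orientedIncMat_eq_zero_iff_forall_adj,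
    LinearMap.mem_range]
  constructor
  · intro hx
    exact ⟨ConnectedComponent.lift x fun _ _ p _ =>
      eq_of_reachable_of_forall_adj hx p.reachable, rfl⟩
  · rintro ⟨y, rfl⟩ a b hab
    exact congrArg y (ConnectedComponent.connectedComponentMk_eq_of_adj hab)

theorem finrank_ker_vecMulLinear_orientedIncMat (R : Type*) [Ring R]
    [StrongRankCondition R] :
    Module.finrank R (LinearMap.ker ((orientedIncMat G).map ((↑) : ℤ → R)).vecMulLinear) =
      Nat.card G.ConnectedComponent := by
  classical
  have hinj : Function.Injective (LinearMap.funLeft R R G.connectedComponentMk) :=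
    LinearMap.funLeft_injective_of_surjective R R _ Quot.mk_surjective
  rw [ker_vecMulLinear_orientedIncMat, LinearMap.finrank_range_of_inj hinj,
    Module.finrank_fintype_fun_eq_card, Nat.card_eq_fintype_card]

theorem rank_orientedIncMat_general [Fintype G.edgeSet] (K : Type*) [Field K] :
    ((orientedIncMat G).map ((↑) : ℤ → K)).rank + Nat.card G.ConnectedComponent =
      Fintype.card V := by
  rw [rank_eq_finrank_span_row, ← range_vecMulLinear,
    ← finrank_ker_vecMulLinear_orientedIncMat G K, LinearMap.finrank_range_add_finrank_ker,
    Module.finrank_fintype_fun_eq_card]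

end

theorem rank_orientedIncMat {V : Type*} [Fintype V] [Nonempty V] [LinearOrder V]
    (G : SimpleGraph V) [DecidableRel G.Adj] (hG : G.Connected) :
    ((orientedIncMat G).map ((↑) : ℤ → ℚ)).rank = Fintype.card V - 1 := by
  have := hG.preconnected.subsingleton_connectedComponent
  rw [← rank_orientedIncMat_general G ℚ, Nat.card_unique, Nat.add_sub_cancel]
end

section
/- Let G be a connected simple graph on a finite nonempty linearly ordered vertex type V with oriented incidence matrix D, let T be a spanning tree of G, and let e be an edge of G not in T. Then there exists a unique integer 1-chain c such that D·c = 0, the coefficient of c on e equals 1, and the coefficient of c on every edge that is neither in T nor equal to e is 0. -/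
open SimpleGraph Matrix

/-!
Traversing a walk in `T` between the endpoints of `e` gives a chain supported on `T` with the same
boundary as `e`, so subtracting it from `e` yields the fundamental cycle.

For uniqueness, a cycle is orthogonal to every coboundary. Removing an edge `f` of the forest `T`
separates the endpoints of `f`, and the coboundary of the indicator of one side of this cut meets
the edges of `T` in `f` only. Hence a cycle supported on `T` vanishes at `f`.
-/

section

variable {V : Type*} [LinearOrder V] {G T : SimpleGraph V}

theorem sym2_mk_inf_sup (z : Sym2 V) : s(z.inf, z.sup) = z :=
  Sym2.sortEquiv.symm_apply_apply z

/-- The elementary 1-chain of an edge traversed from `a` to `b`: it carries the sign of the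
traversal relative to the orientation of the edge from its smaller to its larger endpoint. -/
def adjChain {a b : V} (h : G.Adj a b) : G.edgeSet → ℤ :=
  Pi.single ⟨s(a, b), h⟩ (if a ≤ b then 1 else -1)

/-- The 1-chain traced out by a walk, counting the traversals of each edge with sign. -/
def walkChain {u v : V} : G.Walk u v → G.edgeSet → ℤ
  | .nil => 0
  | .cons h p => adjChain h + walkChain p

theorem walkChain_eq_zero_of_notMem_edges {u v : V} (p : G.Walk u v) {f : G.edgeSet}
    (hf : (f : Sym2 V) ∉ p.edges) : walkChain p f = 0 := by
  induction p with
  | nil => rfl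
  | cons h p ih =>
    rw [Walk.edges_cons, List.mem_cons, not_or] at hf
    have hne : f ≠ ⟨s(_, _), h⟩ := fun heq => hf.1 (congrArg Subtype.val heq)
    rw [walkChain, Pi.add_apply, ih hf.2, adjChain, Pi.single_eq_of_ne hne, add_zero]

theorem orientedIncMat_col (e : G.edgeSet) :
    (orientedIncMat G).col e = Pi.single (e : Sym2 V).sup 1 - Pi.single (e : Sym2 V).inf 1 := by
  ext v
  simp [orientedIncMat, Pi.single_apply]

variable [Fintype G.edgeSet]

theorem orientedIncMat_mulVec_adjChain {a b : V} (h : G.Adj a b) :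
    orientedIncMat G *ᵥ adjChain h = Pi.single b 1 - Pi.single a 1 := by
  rcases le_or_gt a b with hab | hba
  · simp [adjChain, hab, orientedIncMat_col]
  · simp [adjChain, hba.not_ge, hba.le, Pi.single_neg, mulVec_neg, orientedIncMat_col]

theorem orientedIncMat_mulVec_walkChain {u v : V} (p : G.Walk u v) :
    orientedIncMat G *ᵥ walkChain p = Pi.single v 1 - Pi.single u 1 := by
  induction p with
  | nil => rw [walkChain, mulVec_zero, sub_self]
  | cons h p ih =>
    rw [walkChain, mulVec_add, orientedIncMat_mulVec_adjChain, ih, add_comm, sub_add_sub_cancel]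

theorem sum_smul_sub_eq_zero_of_orientedIncMat_mulVec_eq_zero {M : Type*} [AddCommGroup M]
    {d : G.edgeSet → ℤ} (hd : orientedIncMat G *ᵥ d = 0) (y : V → M) :
    ∑ e, d e • (y (e : Sym2 V).sup - y (e : Sym2 V).inf) = 0 := by
  have boundary_eq_zero : ∑ e, d e • (Finsupp.single (e : Sym2 V).sup (1 : ℤ) -
      Finsupp.single (e : Sym2 V).inf 1) = 0 := by
    ext v
    simpa [mulVec, dotProduct, orientedIncMat, Finsupp.single_apply, mul_comm, eq_comm]
      using congrFun hd v
  simpa using congrArg (Finsupp.linearCombination ℤ y) boundary_eq_zero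

theorem eq_zero_of_isBridge_of_orientedIncMat_mulVec_eq_zero
    {d : G.edgeSet → ℤ} (hd : orientedIncMat G *ᵥ d = 0)
    (hdT : ∀ f : G.edgeSet, (f : Sym2 V) ∉ T.edgeSet → d f = 0)
    {f : G.edgeSet} (hf : T.IsBridge (f : Sym2 V)) : d f = 0 := by
  classical
  set T' := T.deleteEdges {(f : Sym2 V)} with hT'
  let side : V → ℤ := fun v => if T'.Reachable (f : Sym2 V).inf v then 1 else 0
  have side_inf : side (f : Sym2 V).inf = 1 := if_pos (Reachable.refl _)
  have side_sup : side (f : Sym2 V).sup = 0 := by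
    rw [← sym2_mk_inf_sup (f : Sym2 V), isBridge_iff, sym2_mk_inf_sup] at hf
    exact if_neg hf
  have side_eq {g : G.edgeSet} (hgT : (g : Sym2 V) ∈ T.edgeSet) (hgf : g ≠ f) :
      side (g : Sym2 V).sup = side (g : Sym2 V).inf := by
    have hadj : T'.Adj (g : Sym2 V).inf (g : Sym2 V).sup := by
      rw [← mem_edgeSet, sym2_mk_inf_sup, hT', edgeSet_deleteEdges]
      exact ⟨hgT, Subtype.coe_injective.ne hgf⟩
    have hiff : T'.Reachable (f : Sym2 V).inf (g : Sym2 V).sup ↔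
        T'.Reachable (f : Sym2 V).inf (g : Sym2 V).inf :=
      ⟨fun h => h.trans hadj.symm.reachable, fun h => h.trans hadj.reachable⟩
    simp only [side, hiff]
  have hsum := sum_smul_sub_eq_zero_of_orientedIncMat_mulVec_eq_zero hd side
  rw [Fintype.sum_eq_single f, side_inf, side_sup] at hsum
  · simpa using hsum
  · intro g hgf
    by_cases hgT : (g : Sym2 V) ∈ T.edgeSet
    · rw [side_eq hgT hgf, sub_self, smul_zero]
    · rw [hdT g hgT, zero_smul]

theorem eq_of_orientedIncMat_mulVec_eq_of_isAcyclic (hT : T.IsAcyclic) {c c' : G.edgeSet → ℤ}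
    (hD : orientedIncMat G *ᵥ c = orientedIncMat G *ᵥ c')
    (hcc' : ∀ f : G.edgeSet, (f : Sym2 V) ∉ T.edgeSet → c f = c' f) : c = c' := by
  have hcycle : orientedIncMat G *ᵥ (c - c') = 0 := by rw [mulVec_sub, hD, sub_self]
  have hsupp (f : G.edgeSet) (hf : (f : Sym2 V) ∉ T.edgeSet) : (c - c') f = 0 :=
    sub_eq_zero.2 (hcc' f hf)
  ext f
  by_cases hf : (f : Sym2 V) ∈ T.edgeSet
  · exact sub_eq_zero.1 <| eq_zero_of_isBridge_of_orientedIncMat_mulVec_eq_zero hcycle hsupp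
      (isAcyclic_iff_forall_isBridge.1 hT hf)
  · exact hcc' f hf

theorem existsUnique_fundamental_cycle_general (hTG : T ≤ G) (hT : T.IsAcyclic) {e : G.edgeSet}
    (he : (e : Sym2 V) ∉ T.edgeSet)
    (hreach : T.Reachable (e : Sym2 V).inf (e : Sym2 V).sup) :
    ∃! c : G.edgeSet → ℤ, orientedIncMat G *ᵥ c = 0 ∧ c e = 1 ∧
      ∀ f : G.edgeSet, (f : Sym2 V) ∉ T.edgeSet → f ≠ e → c f = 0 := by
  obtain ⟨p⟩ := hreach
  let x : G.edgeSet → ℤ := walkChain (p.mapLe hTG)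
  have hx (f : G.edgeSet) (hf : (f : Sym2 V) ∉ T.edgeSet) : x f = 0 := by
    refine walkChain_eq_zero_of_notMem_edges _ fun hfp => hf (p.edges_subset_edgeSet ?_)
    rwa [Walk.edges_mapLe_eq_edges] at hfp
  have hcycle : orientedIncMat G *ᵥ (Pi.single e 1 - x) = 0 := by
    rw [mulVec_sub, mulVec_single_one, orientedIncMat_col, orientedIncMat_mulVec_walkChain,
      sub_self]
  refine ⟨Pi.single e 1 - x,
    ⟨hcycle, by simp [hx e he], fun f hf hfe => by simp [hx f hf, hfe]⟩, ?_⟩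
  rintro c ⟨hc, hce, hcT⟩
  refine eq_of_orientedIncMat_mulVec_eq_of_isAcyclic hT (hc.trans hcycle.symm) fun f hf => ?_
  obtain rfl | hfe := eq_or_ne f e
  · simp [hce, hx f hf]
  · simp [hcT f hf hfe, hx f hf, hfe]

end

theorem existsUnique_fundamental_cycle {V : Type*} [Fintype V] [Nonempty V] [LinearOrder V]
    (G T : SimpleGraph V) [DecidableRel G.Adj] (hG : G.Connected)
    (hTG : T ≤ G) (hT : T.IsTree) (e : G.edgeSet) (he : (e : Sym2 V) ∉ T.edgeSet) :
    ∃! c : G.edgeSet → ℤ, orientedIncMat G *ᵥ c = 0 ∧ c e = 1 ∧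
      ∀ f : G.edgeSet, (f : Sym2 V) ∉ T.edgeSet → f ≠ e → c f = 0 :=
  existsUnique_fundamental_cycle_general hTG hT.isAcyclic he (hT.connected.preconnected _ _)
end

section
/- Let G be a connected simple graph on a finite nonempty linearly ordered vertex type V with oriented incidence matrix D, and let T be a spanning tree of G. Then the family of fundamental cycles (c_e), indexed by the edges e of G not in T, is a basis of the ℤ-module ker D: every cycle of G can be written uniquely as a ℤ-linear combination of the fundamental cycles. -/
open SimpleGraph Matrix

/-!
A `ℤ`-valued potential on the vertices pairs with a cycle to zero: the sum over the edges of the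
potential difference times the coefficient of the cycle vanishes. For a bridge of `T`, a potential
that takes two different constant values on the two sides of the bridge has nonzero difference on
only one edge of `T`, the bridge itself, so a cycle supported on `T` vanishes there. Every edge of
an acyclic graph is a bridge; hence a cycle is determined by its coefficients off `T`, and the
fundamental cycles are the family dual to these coefficients.
-/

section DualFamily

variable {R ι X : Type*} [Fintype ι] {p : ι → X} {c : ι → X → R}

theorem sum_smul_apply_of_dual [NonAssocSemiring R] (hone : ∀ i, c i (p i) = 1)
    (hzero : Pairwise fun i j => c i (p j) = 0) (a : ι → R) (j : ι) :
    (∑ i, a i • c i) (p j) = a j := by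
  rw [Finset.sum_apply, Fintype.sum_eq_single j fun i hij => by simp [hzero hij]]
  simp [hone]

theorem existsUnique_eq_sum_smul_of_dual [Ring R] {M : Submodule R (X → R)}
    (hM : ∀ z ∈ M, (∀ i, z (p i) = 0) → z = 0) (hc : ∀ i, c i ∈ M)
    (hone : ∀ i, c i (p i) = 1) (hzero : Pairwise fun i j => c i (p j) = 0)
    {z : X → R} (hz : z ∈ M) : ∃! a : ι → R, z = ∑ i, a i • c i := by
  have hcoeff := sum_smul_apply_of_dual hone hzero
  refine ⟨fun i => z (p i), ?_, fun a ha => funext fun i => by rw [ha, hcoeff]⟩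
  have hsum : ∑ i, z (p i) • c i ∈ M := M.sum_smul_mem _ fun i _ => hc i
  exact sub_eq_zero.mp <| hM _ (M.sub_mem hz hsum) fun i => by
    rw [Pi.sub_apply, hcoeff, sub_self]

end DualFamily

theorem apply_sup_eq_apply_inf_iff {V α : Type*} [LinearOrder V] (φ : V → α) (x y : V) :
    φ s(x, y).sup = φ s(x, y).inf ↔ φ x = φ y := by
  rcases le_total x y with h | h <;> simp [h, eq_comm]

theorem exists_potential_of_isBridge {V : Type*} [LinearOrder V] (α : Type*) [Nontrivial α]
    {T : SimpleGraph V} {e : Sym2 V} (he : T.IsBridge e) :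
    ∃ φ : V → α, φ e.sup ≠ φ e.inf ∧ ∀ f ∈ T.edgeSet, f ≠ e → φ f.sup = φ f.inf := by
  classical
  obtain ⟨a, b, hab⟩ := exists_pair_ne α
  obtain ⟨u, v⟩ := e
  let T' := T.deleteEdges {s(u, v)}
  let φ : V → α := fun w => if T'.Reachable u w then a else b
  refine ⟨φ, ?_, ?_⟩
  · have huv : ¬ T'.Reachable u v := isBridge_iff.mp he
    have hφ : φ u ≠ φ v := by simpa [φ, huv] using hab
    exact (apply_sup_eq_apply_inf_iff φ u v).not.mpr hφ
  · rintro ⟨x, y⟩ hxy hne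
    have hadj : T'.Adj x y := deleteEdges_adj.mpr ⟨hxy, hne⟩
    have hside : T'.Reachable u x ↔ T'.Reachable u y :=
      ⟨fun h => h.trans hadj.reachable, fun h => h.trans hadj.symm.reachable⟩
    have hφ : φ x = φ y := by simp only [φ, hside]
    exact (apply_sup_eq_apply_inf_iff φ x y).mpr hφ

section Cycles

variable {V : Type*} [LinearOrder V] {G T : SimpleGraph V}

theorem sum_mul_orientedIncMat (φ : V → ℤ) {S : Finset V} {e : G.edgeSet}
    (hsup : (e : Sym2 V).sup ∈ S) (hinf : (e : Sym2 V).inf ∈ S) :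
    ∑ v ∈ S, φ v * orientedIncMat G v e = φ (e : Sym2 V).sup - φ (e : Sym2 V).inf := by
  simp [orientedIncMat, mul_sub, hsup, hinf]

variable [Fintype G.edgeSet] {z : G.edgeSet → ℤ}

theorem sum_potential_sub_mul_cycle_eq_zero (hz : orientedIncMat G *ᵥ z = 0) (φ : V → ℤ) :
    ∑ e : G.edgeSet, (φ (e : Sym2 V).sup - φ (e : Sym2 V).inf) * z e = 0 := by
  let S : Finset V := Finset.univ.image (fun e : G.edgeSet => (e : Sym2 V).sup) ∪
    Finset.univ.image (fun e : G.edgeSet => (e : Sym2 V).inf)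
  have hsup (e : G.edgeSet) : (e : Sym2 V).sup ∈ S :=
    Finset.mem_union_left _ (Finset.mem_image_of_mem _ (Finset.mem_univ e))
  have hinf (e : G.edgeSet) : (e : Sym2 V).inf ∈ S :=
    Finset.mem_union_right _ (Finset.mem_image_of_mem _ (Finset.mem_univ e))
  calc ∑ e : G.edgeSet, (φ (e : Sym2 V).sup - φ (e : Sym2 V).inf) * z e
      = ∑ e, ∑ v ∈ S, φ v * orientedIncMat G v e * z e := by
        simp only [← sum_mul_orientedIncMat φ (hsup _) (hinf _), Finset.sum_mul]
    _ = ∑ v ∈ S, φ v * (orientedIncMat G *ᵥ z) v := by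
        rw [Finset.sum_comm]
        simp only [mulVec, dotProduct, Finset.mul_sum, mul_assoc]
    _ = 0 := by simp [hz]

theorem cycle_apply_eq_zero_of_isBridge (hz : orientedIncMat G *ᵥ z = 0)
    (hsupp : ∀ f : G.edgeSet, (f : Sym2 V) ∉ T.edgeSet → z f = 0)
    {e : G.edgeSet} (he : T.IsBridge e) : z e = 0 := by
  obtain ⟨φ, hφe, hφT⟩ := exists_potential_of_isBridge ℤ he
  have hother (f : G.edgeSet) (hf : f ≠ e) :
      (φ (f : Sym2 V).sup - φ (f : Sym2 V).inf) * z f = 0 := by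
    by_cases hfT : (f : Sym2 V) ∈ T.edgeSet
    · rw [hφT f hfT (Subtype.coe_ne_coe.mpr hf), sub_self, zero_mul]
    · rw [hsupp f hfT, mul_zero]
  have hsum := sum_potential_sub_mul_cycle_eq_zero hz φ
  rw [Fintype.sum_eq_single e hother] at hsum
  exact (mul_eq_zero.mp hsum).resolve_left (sub_ne_zero.mpr hφe)

theorem cycle_eq_zero_of_isAcyclic (hT : T.IsAcyclic) (hz : orientedIncMat G *ᵥ z = 0)
    (hsupp : ∀ f : G.edgeSet, (f : Sym2 V) ∉ T.edgeSet → z f = 0) : z = 0 := by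
  funext f
  by_cases hf : (f : Sym2 V) ∈ T.edgeSet
  · exact cycle_apply_eq_zero_of_isBridge hz hsupp (isAcyclic_iff_forall_isBridge.mp hT hf)
  · exact hsupp f hf

end Cycles

open scoped Classical in
theorem fundamental_cycles_basis_general {V : Type*} [LinearOrder V]
    (G T : SimpleGraph V) [Fintype G.edgeSet] (hT : T.IsAcyclic)
    (c : {e : G.edgeSet // (e : Sym2 V) ∉ T.edgeSet} → G.edgeSet → ℤ)
    (hcycle : ∀ e, orientedIncMat G *ᵥ c e = 0)
    (hone : ∀ e, c e e.1 = 1)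
    (hzero : ∀ e (f : G.edgeSet), (f : Sym2 V) ∉ T.edgeSet → f ≠ e.1 → c e f = 0) :
    ∀ z : G.edgeSet → ℤ, orientedIncMat G *ᵥ z = 0 →
      ∃! a : {e : G.edgeSet // (e : Sym2 V) ∉ T.edgeSet} → ℤ, z = ∑ e, a e • c e := by
  intro z hz
  have hdetermined : ∀ y ∈ LinearMap.ker (orientedIncMat G).mulVecLin,
      (∀ e : {e : G.edgeSet // (e : Sym2 V) ∉ T.edgeSet}, y e.1 = 0) → y = 0 :=
    fun y hy hoff => cycle_eq_zero_of_isAcyclic hT hy fun f hf => hoff ⟨f, hf⟩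
  have hdual : Pairwise fun e f => c e f.1 = 0 :=
    fun e f hef => hzero e f.1 f.2 fun h => hef (Subtype.ext h.symm)
  exact existsUnique_eq_sum_smul_of_dual hdetermined hcycle hone hdual hz

open scoped Classical in
theorem fundamental_cycles_basis {V : Type*} [Fintype V] [Nonempty V] [LinearOrder V]
    (G T : SimpleGraph V) [DecidableRel G.Adj] (hG : G.Connected)
    (hTG : T ≤ G) (hT : T.IsTree)
    (c : {e : G.edgeSet // (e : Sym2 V) ∉ T.edgeSet} → G.edgeSet → ℤ)
    (hcycle : ∀ e, orientedIncMat G *ᵥ c e = 0)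
    (hone : ∀ e, c e e.1 = 1)
    (hzero : ∀ e (f : G.edgeSet), (f : Sym2 V) ∉ T.edgeSet → f ≠ e.1 → c e f = 0) :
    ∀ z : G.edgeSet → ℤ, orientedIncMat G *ᵥ z = 0 →
      ∃! a : {e : G.edgeSet // (e : Sym2 V) ∉ T.edgeSet} → ℤ, z = ∑ e, a e • c e :=
  fundamental_cycles_basis_general G T hT.isAcyclic c hcycle hone hzero
end

section
/- Let G be a connected simple graph on a finite nonempty linearly ordered vertex type V with oriented incidence matrix D, and let T be a spanning tree of G. Let J be the projection sending an integer 1-chain to its restriction to the edges of G not in T. Then the restriction of J to ker D is a bijection (an isomorphism of ℤ-modules) from the set of cycles of G onto the set of all integer-valued functions on the edges of G not in T. -/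
open SimpleGraph Matrix

/-!
The cycles of `G` and the chains supported on `T` are complementary submodules of the chains
of `G`. They intersect trivially because every edge `e` of a forest is a bridge: it is the only edge
of `T` across some cut of `G`, and the net flow of a cycle across a cut is zero. They span because
the boundary of an edge of `G` telescopes along a path of `T` joining its endpoints, so it is also
the boundary of a chain supported on `T`. Since the chains supported on `T` are the kernel of the
restriction to the other edges, that restriction is bijective on cycles.
-/

section Graph

variable {V : Type*} {H : SimpleGraph V}

theorem sub_mem_of_reachable {A S : Type*} [AddGroup A] [SetLike S A] [AddSubgroupClass S A]
    {N : S} {f : V → A} (hadj : ∀ ⦃a b⦄, H.Adj a b → f a - f b ∈ N) {u v : V}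
    (huv : H.Reachable u v) : f u - f v ∈ N := by
  obtain ⟨p⟩ := huv
  induction p with
  | nil => simp only [sub_self, zero_mem]
  | cons hab _ ih => simpa only [sub_add_sub_cancel] using add_mem (hadj hab) ih

theorem exists_finset_separating_of_isAcyclic (hH : H.IsAcyclic) {a b : V} (hab : H.Adj a b)
    {W : Finset V} (ha : a ∈ W) :
    ∃ S : Finset V, a ∈ S ∧ b ∉ S ∧
      ∀ u ∈ W, ∀ v ∈ W, H.Adj u v → s(u, v) ≠ s(a, b) → (u ∈ S ↔ v ∈ S) := by
  classical
  let H' := H.deleteEdges {s(a, b)}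
  have hbridge : ¬ H'.Reachable a b :=
    isBridge_iff.mp (isAcyclic_iff_forall_adj_isBridge.mp hH hab)
  refine ⟨{v ∈ W | H'.Reachable a v}, ?_, ?_, fun u hu v hv huv hne => ?_⟩
  · simp [ha]
  · simp [hbridge]
  · have hreach : H'.Reachable u v := (deleteEdges_adj.mpr ⟨huv, hne⟩).reachable
    simpa only [Finset.mem_filter, hu, hv, true_and] using
      ⟨fun h => h.trans hreach, fun h => h.trans hreach.symm⟩

end Graph

section Restriction

variable {V : Type*} {G T : SimpleGraph V}

/-- The projection `J` restricting an integer 1-chain of `G` to the edges outside `T`. Its kernel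
is the module of chains supported on `T`. -/
def restrictOff (G T : SimpleGraph V) :
    (G.edgeSet → ℤ) →ₗ[ℤ] ({e : G.edgeSet // (e : Sym2 V) ∉ T.edgeSet} → ℤ) :=
  LinearMap.funLeft ℤ ℤ Subtype.val

theorem restrictOff_surjective : Function.Surjective (restrictOff G T) :=
  LinearMap.funLeft_surjective_of_injective ℤ ℤ _ Subtype.val_injective

theorem mem_ker_restrictOff {c : G.edgeSet → ℤ} :
    c ∈ (restrictOff G T).ker ↔ ∀ e : G.edgeSet, (e : Sym2 V) ∉ T.edgeSet → c e = 0 := by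
  simp [restrictOff, funext_iff, LinearMap.funLeft_apply]

end Restriction

theorem sym2_mk_inf_sup_s7 {α : Type*} [LinearOrder α] (e : Sym2 α) : s(e.inf, e.sup) = e :=
  Sym2.sortEquiv.symm_apply_apply e

section IncidenceMatrix

variable {V : Type*} [LinearOrder V] {G T : SimpleGraph V}

variable [Fintype G.edgeSet]

theorem sum_orientedIncMat_mulVec (S : Finset V) (c : G.edgeSet → ℤ) :
    ∑ v ∈ S, (orientedIncMat G *ᵥ c) v =
      ∑ e : G.edgeSet, ((if (e : Sym2 V).sup ∈ S then 1 else 0) -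
        (if (e : Sym2 V).inf ∈ S then 1 else 0)) * c e := by
  simp only [mulVec, dotProduct]
  rw [Finset.sum_comm]
  simp [← Finset.sum_mul, orientedIncMat, Finset.sum_sub_distrib]

theorem apply_eq_zero_of_only_crossing {c : G.edgeSet → ℤ} (hc : orientedIncMat G *ᵥ c = 0)
    {S : Finset V} {e : G.edgeSet} (hinf : (e : Sym2 V).inf ∈ S) (hsup : (e : Sym2 V).sup ∉ S)
    (hcross : ∀ f ≠ e, c f ≠ 0 → ((f : Sym2 V).inf ∈ S ↔ (f : Sym2 V).sup ∈ S)) : c e = 0 := by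
  have hflow := sum_orientedIncMat_mulVec S c
  rw [hc, Finset.sum_eq_single e] at hflow
  · simpa [hinf, hsup] using hflow
  · intro f _ hfe
    by_cases hf : c f = 0
    · rw [hf, mul_zero]
    · simp only [hcross f hfe hf, sub_self, zero_mul]
  · simp

theorem disjoint_ker_orientedIncMat_ker_restrictOff (hT : T.IsAcyclic) :
    Disjoint (orientedIncMat G).mulVecLin.ker (restrictOff G T).ker := by
  rw [Submodule.disjoint_def]
  intro c hcycle hsupp
  rw [mem_ker_restrictOff] at hsupp
  ext e
  by_contra hce
  have adj_of_ne_zero (f : G.edgeSet) (hf : c f ≠ 0) :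
      T.Adj (f : Sym2 V).inf (f : Sym2 V).sup := by
    rw [← mem_edgeSet, sym2_mk_inf_sup_s7]
    exact not_imp_comm.mp (hsupp f) hf
  let W : Finset V :=
    Finset.univ.biUnion fun f : G.edgeSet => {(f : Sym2 V).inf, (f : Sym2 V).sup}
  have inf_mem (f : G.edgeSet) : (f : Sym2 V).inf ∈ W :=
    Finset.mem_biUnion.mpr ⟨f, Finset.mem_univ f, by simp⟩
  have sup_mem (f : G.edgeSet) : (f : Sym2 V).sup ∈ W :=
    Finset.mem_biUnion.mpr ⟨f, Finset.mem_univ f, by simp⟩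
  obtain ⟨S, hinf, hsup, hcut⟩ :=
    exists_finset_separating_of_isAcyclic hT (adj_of_ne_zero e hce) (inf_mem e)
  refine hce (apply_eq_zero_of_only_crossing hcycle hinf hsup fun f hfe hf => ?_)
  refine hcut _ (inf_mem f) _ (sup_mem f) (adj_of_ne_zero f hf) ?_
  simpa only [sym2_mk_inf_sup_s7, ne_eq, Subtype.coe_inj] using hfe

theorem single_sub_single_mem_map_ker_restrictOff (hTG : T ≤ G) {u v : V}
    (huv : T.Reachable u v) :
    (Pi.single u 1 - Pi.single v 1 : V → ℤ) ∈
      (restrictOff G T).ker.map (orientedIncMat G).mulVecLin := by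
  classical
  refine sub_mem_of_reachable (f := fun w => Pi.single w 1) (fun a b hab => ?_) huv
  let e : G.edgeSet := ⟨s(a, b), hTG hab⟩
  have hcol : (orientedIncMat G).col e ∈
      (restrictOff G T).ker.map (orientedIncMat G).mulVecLin := by
    refine ⟨Pi.single e 1, mem_ker_restrictOff.mpr fun f hf => ?_, by simp⟩
    exact Pi.single_eq_of_ne (by rintro rfl; exact hf hab) 1
  rw [orientedIncMat_col] at hcol
  rcases le_total a b with hle | hle
  · rw [sub_mem_comm_iff]
    simpa [e, hle] using hcol
  · simpa [e, hle] using hcol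

theorem codisjoint_ker_orientedIncMat_ker_restrictOff (hTG : T ≤ G)
    (hreach : ∀ ⦃u v⦄, G.Adj u v → T.Reachable u v) :
    Codisjoint (orientedIncMat G).mulVecLin.ker (restrictOff G T).ker := by
  refine (Submodule.map_eq_range_iff.mp (le_antisymm LinearMap.map_le_range ?_)).symm
  rw [range_mulVecLin, Submodule.span_le]
  rintro _ ⟨e, rfl⟩
  have hadj : G.Adj (e : Sym2 V).inf (e : Sym2 V).sup := by
    rw [← mem_edgeSet, sym2_mk_inf_sup_s7]
    exact e.property
  rw [orientedIncMat_col]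
  exact single_sub_single_mem_map_ker_restrictOff hTG (hreach hadj).symm

theorem restriction_to_nontree_edges_bijective_general (hTG : T ≤ G) (hT : T.IsAcyclic)
    (hreach : ∀ ⦃u v⦄, G.Adj u v → T.Reachable u v) :
    Function.Bijective ((restrictOff G T).domRestrict (orientedIncMat G).mulVecLin.ker) :=
  ⟨LinearMap.injective_domRestrict_iff.mpr (disjoint_ker_orientedIncMat_ker_restrictOff hT),
    (LinearMap.surjective_domRestrict_iff restrictOff_surjective).mpr
      (codisjoint_ker_orientedIncMat_ker_restrictOff hTG hreach)⟩

end IncidenceMatrix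

theorem restriction_to_nontree_edges_bijective {V : Type*} [Fintype V] [Nonempty V]
    [LinearOrder V] (G T : SimpleGraph V) [DecidableRel G.Adj] (hG : G.Connected)
    (hTG : T ≤ G) (hT : T.IsTree) :
    Function.Bijective
      (fun (z : {c : G.edgeSet → ℤ // orientedIncMat G *ᵥ c = 0})
          (e : {e : G.edgeSet // (e : Sym2 V) ∉ T.edgeSet}) => z.1 e.1) :=
  restriction_to_nontree_edges_bijective_general hTG hT.isAcyclic fun u v _ => hT.connected u v
end

section
/- Let G be a connected simple graph on a finite nonempty linearly ordered vertex type V with oriented incidence matrix D, and let T be a spanning tree of G. If x and y are integer 1-chains with equal boundaries, D·x = D·y, and x and y agree on every edge of G not in T, then x = y. -/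
/-!
The difference `z = x - y` is a cycle supported on a forest `T`. Each coefficient of such a chain
can be read off from its boundary: deleting an edge `e` of `T` separates its endpoints, and the
indicator `φ` of the vertices cut off from the smaller endpoint is a `0`-cochain whose coboundary is
`1` on `e` and `0` on all other edges of `T`. Hence `z e = ⟨δφ, z⟩ = ⟨φ, ∂z⟩ = 0`.
-/

open SimpleGraph Matrix

section ChainComplex

variable {V A : Type*} [LinearOrder V] [AddCommGroup A] {G : SimpleGraph V}

/-- The boundary map from `1`-chains to `0`-chains of a graph with coefficients in `A`, each edge
being oriented from its smaller to its larger endpoint. Chains are finitely supported functions, so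
that the graph may be infinite. -/
noncomputable def boundary : (G.edgeSet →₀ A) →+ (V →₀ A) :=
  Finsupp.liftAddHom fun e ↦
    Finsupp.singleAddHom (e : Sym2 V).sup - Finsupp.singleAddHom (e : Sym2 V).inf

/-- The coboundary of an integer `0`-cochain, for the same orientation as in `boundary`. It is
defined on all pairs of vertices, so that one cochain can be used for several graphs on `V`. -/
def coboundary (φ : V → ℤ) (e : Sym2 V) : ℤ :=
  φ e.sup - φ e.inf

theorem boundary_single (e : G.edgeSet) (a : A) :
    boundary (Finsupp.single e a) =
      Finsupp.single (e : Sym2 V).sup a - Finsupp.single (e : Sym2 V).inf a := by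
  simp [boundary]

theorem coe_boundary_eq_mulVec [Fintype G.edgeSet] (z : G.edgeSet →₀ ℤ) :
    ⇑(boundary z) = orientedIncMat G *ᵥ z := by
  classical
  induction z using Finsupp.induction_linear with
  | zero => simp
  | add z w hz hw => rw [map_add, Finsupp.coe_add, hz, hw, Finsupp.coe_add, mulVec_add]
  | single e a =>
    rw [boundary_single, Finsupp.single_eq_pi_single, mulVec_single]
    ext v
    simp [orientedIncMat, sub_mul, Finsupp.single_apply, eq_comm]

theorem sum_boundary_smul (φ : V → ℤ) (z : G.edgeSet →₀ A) :
    ((boundary z).sum fun v a ↦ φ v • a) = z.sum fun e a ↦ coboundary φ e • a := by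
  induction z using Finsupp.induction_linear with
  | zero => simp
  | add z w hz hw =>
    rw [map_add, Finsupp.sum_add_index' (fun _ ↦ smul_zero _) (fun _ ↦ smul_add _), hz, hw,
      Finsupp.sum_add_index' (fun _ ↦ smul_zero _) (fun _ ↦ smul_add _)]
  | single e a =>
    rw [boundary_single, Finsupp.sum_sub_index (fun _ ↦ smul_sub _)]
    simp [coboundary, sub_smul]

end ChainComplex

section Forest

variable {V : Type*} [LinearOrder V] {T : SimpleGraph V} {e f : Sym2 V}

theorem mk_inf_sup (e : Sym2 V) : s(e.inf, e.sup) = e :=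
  Sym2.sortEquiv.symm_apply_apply e

theorem isBridge_iff_not_reachable_inf_sup :
    T.IsBridge e ↔ ¬(T.deleteEdges {e}).Reachable e.inf e.sup := by
  conv_lhs => rw [← mk_inf_sup e, isBridge_iff, mk_inf_sup]

theorem adj_inf_sup_iff : T.Adj e.inf e.sup ↔ e ∈ T.edgeSet := by
  rw [← mem_edgeSet, mk_inf_sup]

open scoped Classical in
/-- The cut cochain of an edge `e` of `T`: the indicator of the vertices that are separated from
the smaller endpoint of `e` when `e` is deleted from `T`. -/
noncomputable def cutCochain (T : SimpleGraph V) (e : Sym2 V) : V → ℤ :=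
  fun v ↦ if (T.deleteEdges {e}).Reachable e.inf v then 0 else 1

theorem coboundary_cutCochain_self (he : T.IsBridge e) : coboundary (cutCochain T e) e = 1 := by
  simp [coboundary, cutCochain, isBridge_iff_not_reachable_inf_sup.mp he]

theorem coboundary_cutCochain_of_ne (hf : f ∈ T.edgeSet) (hfe : f ≠ e) :
    coboundary (cutCochain T e) f = 0 := by
  classical
  have hadj : (T.deleteEdges {e}).Adj f.inf f.sup := by
    rw [adj_inf_sup_iff, edgeSet_deleteEdges]
    exact ⟨hf, hfe⟩
  have same_side : cutCochain T e f.sup = cutCochain T e f.inf :=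
    if_congr ⟨fun h ↦ h.trans hadj.reachable.symm, fun h ↦ h.trans hadj.reachable⟩ rfl rfl
  exact sub_eq_zero.mpr same_side

end Forest

section Cycles

variable {V A : Type*} [LinearOrder V] [AddCommGroup A] {G T : SimpleGraph V}

theorem sum_boundary_smul_cutCochain {z : G.edgeSet →₀ A} {e : G.edgeSet}
    (he : T.IsBridge (e : Sym2 V)) (hz : ∀ f : G.edgeSet, (f : Sym2 V) ∉ T.edgeSet → z f = 0) :
    ((boundary z).sum fun v a ↦ cutCochain T e v • a) = z e := by
  rw [sum_boundary_smul, Finsupp.sum_eq_single e, coboundary_cutCochain_self he, one_smul]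
  · intro f hzf hfe
    have hf : (f : Sym2 V) ∈ T.edgeSet := not_imp_comm.mp (hz f) hzf
    rw [coboundary_cutCochain_of_ne hf (Subtype.coe_ne_coe.mpr hfe), zero_smul]
  · exact fun _ ↦ smul_zero _

theorem eq_zero_of_boundary_eq_zero_of_isAcyclic (hT : T.IsAcyclic) {z : G.edgeSet →₀ A}
    (hb : boundary z = 0) (hz : ∀ e : G.edgeSet, (e : Sym2 V) ∉ T.edgeSet → z e = 0) :
    z = 0 := by
  ext e
  by_cases he : (e : Sym2 V) ∈ T.edgeSet
  · have bridge : T.IsBridge (e : Sym2 V) := isAcyclic_iff_forall_isBridge.mp hT he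
    rw [← sum_boundary_smul_cutCochain bridge hz, hb, Finsupp.sum_zero_index, Finsupp.zero_apply]
  · exact hz e he

theorem eq_of_boundary_eq_of_agree_off_tree_general (hT : T.IsAcyclic) {x y : G.edgeSet →₀ A}
    (hb : boundary x = boundary y)
    (hagree : ∀ e : G.edgeSet, (e : Sym2 V) ∉ T.edgeSet → x e = y e) :
    x = y :=
  sub_eq_zero.mp <| eq_zero_of_boundary_eq_zero_of_isAcyclic hT
    (by rw [map_sub, hb, sub_self]) fun e he ↦ sub_eq_zero.mpr (hagree e he)

end Cycles

theorem eq_of_boundary_eq_of_agree_off_tree {V : Type*} [Fintype V] [Nonempty V]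
    [LinearOrder V] (G T : SimpleGraph V) [DecidableRel G.Adj] (hG : G.Connected)
    (hTG : T ≤ G) (hT : T.IsTree) (x y : G.edgeSet → ℤ)
    (hb : orientedIncMat G *ᵥ x = orientedIncMat G *ᵥ y)
    (hagree : ∀ e : G.edgeSet, (e : Sym2 V) ∉ T.edgeSet → x e = y e) :
    x = y :=
  Finsupp.equivFunOnFinite.symm.injective <| eq_of_boundary_eq_of_agree_off_tree_general
    hT.isAcyclic (DFunLike.coe_injective (by simpa [coe_boundary_eq_mulVec] using hb)) hagree
end
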